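/- Assume ζ₀ := ū^{in}/u_s > 1, let (u₀, E₀) ∈ T_dec with u₀ > u_s, and let (ū₁, Ē) : [0, l̃_max) → ℝ² be a smooth solution of the system (ū₁^{γ+1} − u_s^{γ+1})·ū₁' = Ē·ū₁^γ, Ē' = J/ū₁ − ρ̄^{in} with (ū₁, Ē)(0) = (u₀, E₀), ū₁ > 0, and ū₁' < 0 on [0, l̃_max). Define α₁₁ := 1 − (ū₁/u_s)^{γ+1} and β₁ := (Ē − (γ+1)ū₁'ū₁)·ū₁^{γ−1}/u_s^{γ+1}. Then for every m ∈ {0,1,2,3} and every x₁ ∈ [0, l̃_max): −2β₁(x₁) − (2m−1)·α₁₁'(x₁) < 0. In particular, the coefficient inequality −2β₁ − (2m−1)∂₁α₁₁ ≥ λ > 0 fails for every positive constant λ along the decelerating smooth transonic solution. -/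

import Mathlib

open Set Filter intervalIntegral

/-- The sonic speed `u_s = (γ S₀ J^{γ−1})^{1/(γ+1)}`. -/
noncomputable def usonic (γ S₀ J : ℝ) : ℝ :=
  (γ * S₀ * J ^ (γ - 1)) ^ (1 / (γ + 1))

/-- `ū^{in} = J / ρ̄^{in}`. -/
noncomputable def uIn (ρin J : ℝ) : ℝ := J / ρin

/-- `H(u) = (J/ū^{in}) ∫_{u_s}^{u} t^{−(γ+1)} (t^{γ+1} − u_s^{γ+1})(ū^{in} − t) dt`. -/
noncomputable def Hfun (γ ρin S₀ J : ℝ) (u : ℝ) : ℝ :=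
  (J / uIn ρin J) *
    ∫ t in usonic γ S₀ J..u,
      t ^ (-(γ + 1)) * ((t ^ (γ + 1) - usonic γ S₀ J ^ (γ + 1)) * (uIn ρin J - t))

/-- The critical trajectory `T = {(u,E) ∈ (0,∞) × ℝ : ½E² − H(u) = 0}`. -/
def critTraj (γ ρin S₀ J : ℝ) : Set (ℝ × ℝ) :=
  {p | 0 < p.1 ∧ p.2 ^ 2 / 2 - Hfun γ ρin S₀ J p.1 = 0}

/-- The critical trajectory with acceleration. -/
def critTrajAcc (γ ρin S₀ J : ℝ) : Set (ℝ × ℝ) :=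
  {p ∈ critTraj γ ρin S₀ J | 0 ≤ (p.1 - usonic γ S₀ J) * p.2}

/-- The critical trajectory with deceleration. -/
def critTrajDec (γ ρin S₀ J : ℝ) : Set (ℝ × ℝ) :=
  {p ∈ critTraj γ ρin S₀ J | (p.1 - usonic γ S₀ J) * p.2 ≤ 0}

/-!
Put `M = (u / u_s) ^ (γ + 1)`. The momentum equation determines `E` from `u` and `u'`, and turns
both coefficients into multiples of the logarithmic derivative of `u`:
`β₁ = -(γ M + 1) u' / u` and `∂₁α₁₁ = -(γ + 1) M u' / u`. Hence
`-2 β₁ - (2 m - 1) ∂₁α₁₁ = (((2 m + 1) (γ + 1) - 2) M + 2) u' / u`,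
which has the sign of `u'` as soon as `2 ≤ (2 m + 1) (γ + 1)`.
-/

/-- The coefficient `α₁₁` of `∂₁₁` in the linearized operator, at a point where the velocity is `v`
and the sonic speed is `s`. -/
noncomputable def diffusionCoeff (γ s v : ℝ) : ℝ :=
  1 - (v / s) ^ (γ + 1)

/-- The coefficient `β₁` of `∂₁` in the linearized operator, at a point where the velocity is `v`,
its derivative is `v'` and the electric field is `e`; `s` is the sonic speed. -/
noncomputable def driftCoeff (γ s v v' e : ℝ) : ℝ :=
  (e - (γ + 1) * v' * v) * v ^ (γ - 1) / s ^ (γ + 1)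

/-- The quantity `-2 β₁ - (2 m - 1) ∂₁α₁₁` at `x`, along the velocity `u` and the electric field
`E`, whose positivity underlies the a priori estimates. Derivatives are taken within `D`, so that an
endpoint of the interval of existence is allowed. -/
noncomputable def coercivityCoeff (γ s m : ℝ) (u E : ℝ → ℝ) (D : Set ℝ) (x : ℝ) : ℝ :=
  -2 * driftCoeff γ s (u x) (derivWithin u D x) (E x)
    - (2 * m - 1) * derivWithin (fun y => diffusionCoeff γ s (u y)) D x

theorem usonic_pos {γ S₀ J : ℝ} (hγ : 0 < γ) (hS₀ : 0 < S₀) (hJ : 0 < J) :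
    0 < usonic γ S₀ J := by
  unfold usonic
  positivity

section

variable {γ s m x : ℝ} {u E : ℝ → ℝ} {D : Set ℝ}

theorem driftCoeff_eq_of_momentum {v v' e : ℝ} (hs : 0 < s) (hv : 0 < v)
    (hmom : (v ^ (γ + 1) - s ^ (γ + 1)) * v' = e * v ^ γ) :
    driftCoeff γ s v v' e = -(γ * (v / s) ^ (γ + 1) + 1) * (v' / v) := by
  have hfield : e * v ^ (γ - 1) = (v ^ (γ + 1) - s ^ (γ + 1)) * v' / v := by
    rw [hmom, Real.rpow_sub_one hv.ne', mul_div_assoc]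
  have hconv : v * v ^ (γ - 1) = v ^ (γ + 1) / v := by
    rw [Real.rpow_sub_one hv.ne', Real.rpow_add_one hv.ne']
    field_simp
  have hs' : s ^ (γ + 1) ≠ 0 := (Real.rpow_pos_of_pos hs _).ne'
  calc driftCoeff γ s v v' e
      = (e * v ^ (γ - 1) - (γ + 1) * v' * (v * v ^ (γ - 1))) / s ^ (γ + 1) := by
        rw [driftCoeff]; ring
    _ = -(γ * (v ^ (γ + 1) / s ^ (γ + 1)) + 1) * (v' / v) := by
        rw [hfield, hconv]
        field_simp
        ring
    _ = -(γ * (v / s) ^ (γ + 1) + 1) * (v' / v) := by rw [Real.div_rpow hv.le hs.le]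

theorem derivWithin_diffusionCoeff (hs : s ≠ 0) (hux : u x ≠ 0)
    (hu : DifferentiableWithinAt ℝ u D x) :
    derivWithin (fun y => diffusionCoeff γ s (u y)) D x =
      -((γ + 1) * (u x / s) ^ (γ + 1)) * (derivWithin u D x / u x) := by
  by_cases hD : UniqueDiffWithinAt ℝ D x
  · have hne : u x / s ≠ 0 := div_ne_zero hux hs
    have hderiv := ((hu.hasDerivWithinAt.div_const s).rpow_const
      (p := γ + 1) (Or.inl hne)).const_sub 1
    simp only [diffusionCoeff]
    rw [hderiv.derivWithin hD, add_sub_cancel_right, Real.rpow_add_one hne]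
    field_simp
  · rw [derivWithin_zero_of_not_uniqueDiffWithinAt hD,
      derivWithin_zero_of_not_uniqueDiffWithinAt hD, zero_div, mul_zero]

theorem coercivityCoeff_eq_of_momentum (hs : 0 < s) (hux : 0 < u x)
    (hu : DifferentiableWithinAt ℝ u D x)
    (hmom : (u x ^ (γ + 1) - s ^ (γ + 1)) * derivWithin u D x = E x * u x ^ γ) :
    coercivityCoeff γ s m u E D x =
      (((2 * m + 1) * (γ + 1) - 2) * (u x / s) ^ (γ + 1) + 2) * (derivWithin u D x / u x) := by
  rw [coercivityCoeff, driftCoeff_eq_of_momentum hs hux hmom,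
    derivWithin_diffusionCoeff hs.ne' hux.ne' hu]
  ring

theorem stmt14_general (hs : 0 < s) (hm : 2 ≤ (2 * m + 1) * (γ + 1)) (hux : 0 < u x)
    (hmom : (u x ^ (γ + 1) - s ^ (γ + 1)) * derivWithin u D x = E x * u x ^ γ)
    (hdec : derivWithin u D x < 0) :
    coercivityCoeff γ s m u E D x < 0 := by
  have hu : DifferentiableWithinAt ℝ u D x :=
    differentiableWithinAt_of_derivWithin_ne_zero hdec.ne
  rw [coercivityCoeff_eq_of_momentum hs hux hu hmom]
  have hM : 0 < (u x / s) ^ (γ + 1) := Real.rpow_pos_of_pos (div_pos hux hs) _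
  have hfactor : 0 < ((2 * m + 1) * (γ + 1) - 2) * (u x / s) ^ (γ + 1) + 2 :=
    add_pos_of_nonneg_of_pos (mul_nonneg (sub_nonneg.2 hm) hM.le) two_pos
  exact mul_neg_of_pos_of_neg hfactor (div_neg_of_neg_of_pos hdec hux)

end

/-- Along the decelerating smooth transonic solution, the coefficient quantity
`−2β₁ − (2m−1)∂₁α₁₁` is strictly negative for `m = 0,1,2,3`; in particular the key
coefficient inequality `−2β₁ − (2m−1)∂₁α₁₁ ≥ λ > 0` fails for every positive `λ`. -/
theorem stmt14
    (γ ρin S₀ J u₀ E₀ lmax : ℝ)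
    (hγ : 1 < γ) (hρin : 0 < ρin) (hS₀ : 0 < S₀) (hJ : 0 < J)
    (hζ₀ : 1 < uIn ρin J / usonic γ S₀ J)
    (hinit : (u₀, E₀) ∈ critTrajDec γ ρin S₀ J)
    (hu₀s : usonic γ S₀ J < u₀)
    (hlmax : 0 < lmax)
    (u E : ℝ → ℝ)
    (husm : ContDiffOn ℝ (⊤ : ℕ∞) u (Ico 0 lmax)) (hEsm : ContDiffOn ℝ (⊤ : ℕ∞) E (Ico 0 lmax))
    (hupos : ∀ x ∈ Ico (0:ℝ) lmax, 0 < u x)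
    (hu0 : u 0 = u₀) (hE0 : E 0 = E₀)
    (hODE : ∀ x ∈ Ico (0:ℝ) lmax,
      (u x ^ (γ + 1) - usonic γ S₀ J ^ (γ + 1)) * derivWithin u (Ico 0 lmax) x
        = E x * u x ^ γ ∧
      derivWithin E (Ico 0 lmax) x = J / u x - ρin)
    (hdec : ∀ x ∈ Ico (0:ℝ) lmax, derivWithin u (Ico 0 lmax) x < 0) :
    (∀ m : ℕ, m ≤ 3 → ∀ x ∈ Ico (0:ℝ) lmax,
      -2 * ((E x - (γ + 1) * derivWithin u (Ico 0 lmax) x * u x) * u x ^ (γ - 1)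
              / usonic γ S₀ J ^ (γ + 1))
        - (2 * (m : ℝ) - 1)
          * derivWithin (fun y => 1 - (u y / usonic γ S₀ J) ^ (γ + 1)) (Ico 0 lmax) x
      < 0) ∧
    (∀ lam : ℝ, 0 < lam →
      ¬ (∀ m : ℕ, m ≤ 3 → ∀ x ∈ Ico (0:ℝ) lmax,
        lam ≤
          -2 * ((E x - (γ + 1) * derivWithin u (Ico 0 lmax) x * u x) * u x ^ (γ - 1)
                  / usonic γ S₀ J ^ (γ + 1))
            - (2 * (m : ℝ) - 1)
              * derivWithin (fun y => 1 - (u y / usonic γ S₀ J) ^ (γ + 1))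
                  (Ico 0 lmax) x)) := by
  have hneg (m : ℕ) {x : ℝ} (hx : x ∈ Ico 0 lmax) :
      coercivityCoeff γ (usonic γ S₀ J) m u E (Ico 0 lmax) x < 0 :=
    stmt14_general (usonic_pos (by linarith) hS₀ hJ) (by nlinarith [m.cast_nonneg (α := ℝ)])
      (hupos x hx) (hODE x hx).1 (hdec x hx)
  exact ⟨fun m _ x hx => hneg m hx, fun lam hlam hle =>
    (hneg 0 ⟨le_rfl, hlmax⟩).not_ge (hlam.le.trans (hle 0 (Nat.zero_le 3) 0 ⟨le_rfl, hlmax⟩))⟩
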